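/- Let λ_1, …, λ_n be distinct nonzero real numbers, A = diag(λ_1, …, λ_n), and let C = (c_1, …, c_n) ∈ ℝ^{1×n} with c_j ≠ 0 for every j. Let K ≥ 1 with 2K+1 ≤ n. Suppose x₀ ∈ ℝ^n is K-sparse and satisfies the sign condition c_i (x₀)_i ≥ 0 for every i. Let y ∈ ℝ^{2K+1} be the vector of observations y_t = C A^t x₀ for t = 0, 1, …, 2K, and let M ∈ ℝ^{(2K+1)×n} be the Vandermonde-type matrix with entries M_{t,j} = λ_j^{t-1}. Then z₀ := diag(c_1, …, c_n) x₀ is the unique minimizer of ‖z‖₁ subject to M z = y, and consequently x₀ is exactly recovered from the 2K+1 successive observations via (x₀)_i = (z₀)_i / c_i. -/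

import Mathlib

open Matrix

/-!
A feasible `z` differs from `z₀` by a vector `u` whose moments `∑ λ_j ^ t u_j`, `t ≤ 2K`, vanish;
hence `∑ p(λ_j) u_j = 0` for every polynomial `p` of degree at most `2K`. Since `z₀ ≥ 0`, the moment
`t = 0` gives `‖z₀‖₁ = ∑ z_j ≤ ‖z‖₁`, with equality only if `z ≥ 0`, and in that case `u` is
nonnegative off the support `S` of `z₀`. Taking for `p` the square of `∏_{j ∈ S} (X - λ_j)`, which
vanishes exactly on the nodes of `S`, shows that `u` is zero off `S`. Finally
`∏_{j ∈ S \ {i}} (X - λ_j)` isolates each coordinate `i ∈ S`, so `u = 0`.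
-/

section

open Finset Polynomial

variable {ι R : Type*} [Fintype ι]

theorem eval_dotProduct_eq_zero_of_pow_dotProduct_eq_zero [CommSemiring R] {lam u : ι → R}
    {p : R[X]} (hu : ∀ t ≤ p.natDegree, lam ^ t ⬝ᵥ u = 0) : (fun j ↦ p.eval (lam j)) ⬝ᵥ u = 0 := by
  have eval_eq : (fun j ↦ p.eval (lam j)) = ∑ t ∈ range (p.natDegree + 1), p.coeff t • lam ^ t := by
    ext j
    simp [eval_eq_sum_range]
  rw [eval_eq, sum_dotProduct]
  refine sum_eq_zero fun t ht ↦ ?_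
  rw [smul_dotProduct, hu t (Nat.lt_succ_iff.mp (mem_range.mp ht)), smul_zero]

theorem eq_zero_of_pow_dotProduct_eq_zero_of_eq_zero_off [CommRing R] [IsDomain R] {lam u : ι → R}
    {S : Finset ι} (hlam : Set.InjOn lam S) (hoff : ∀ i ∉ S, u i = 0)
    (hu : ∀ t < #S, lam ^ t ⬝ᵥ u = 0) : u = 0 := by
  classical
  ext i
  by_cases hi : i ∈ S
  · let p := Lagrange.nodal (S.erase i) lam
    have degree_lt : p.natDegree < #S := by
      rw [Lagrange.natDegree_nodal]
      exact card_erase_lt_of_mem hi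
    have eval_ne_zero : p.eval (lam i) ≠ 0 :=
      Lagrange.eval_nodal_not_at_node fun j hj ↦
        hlam.ne hi (mem_of_mem_erase hj) (ne_of_mem_erase hj).symm
    have other_terms : ∀ j, j ≠ i → p.eval (lam j) * u j = 0 := fun j hji ↦ by
      by_cases hj : j ∈ S
      · rw [Lagrange.eval_nodal_at_node (mem_erase.mpr ⟨hji, hj⟩), zero_mul]
      · rw [hoff j hj, mul_zero]
    have term_eq_zero : p.eval (lam i) * u i = 0 := by
      rw [← Fintype.sum_eq_single i other_terms]
      exact eval_dotProduct_eq_zero_of_pow_dotProduct_eq_zero fun t ht ↦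
        hu t (ht.trans_lt degree_lt)
    exact (mul_eq_zero.mp term_eq_zero).resolve_left eval_ne_zero
  · exact hoff i hi

section OrderedRing

variable [CommRing R] [LinearOrder R] [IsStrictOrderedRing R]

theorem apply_eq_zero_of_nonneg_off_of_pow_dotProduct_eq_zero {lam u : ι → R} {S : Finset ι}
    (hnonneg : ∀ i ∉ S, 0 ≤ u i) (hu : ∀ t ≤ 2 * #S, lam ^ t ⬝ᵥ u = 0)
    {i : ι} (hi : ∀ j ∈ S, lam i ≠ lam j) : u i = 0 := by
  let p := Lagrange.nodal S lam
  have terms_nonneg : ∀ j, 0 ≤ (p ^ 2).eval (lam j) * u j := fun j ↦ by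
    rw [eval_pow]
    by_cases hj : j ∈ S
    · rw [Lagrange.eval_nodal_at_node hj, zero_pow two_ne_zero, zero_mul]
    · exact mul_nonneg (sq_nonneg _) (hnonneg j hj)
  have sum_eq_zero : ∑ j, (p ^ 2).eval (lam j) * u j = 0 :=
    eval_dotProduct_eq_zero_of_pow_dotProduct_eq_zero fun t ht ↦ hu t <| by
      rwa [natDegree_pow, Lagrange.natDegree_nodal] at ht
  have term_eq_zero : (p ^ 2).eval (lam i) * u i = 0 :=
    congrFun ((Fintype.sum_eq_zero_iff_of_nonneg terms_nonneg).mp sum_eq_zero) i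
  rw [eval_pow] at term_eq_zero
  exact (mul_eq_zero.mp term_eq_zero).resolve_left
    (pow_ne_zero 2 (Lagrange.eval_nodal_not_at_node hi))

theorem eq_zero_of_nonneg_off_of_pow_dotProduct_eq_zero {lam u : ι → R}
    (hlam : Function.Injective lam) {S : Finset ι} (hnonneg : ∀ i ∉ S, 0 ≤ u i)
    (hu : ∀ t ≤ 2 * #S, lam ^ t ⬝ᵥ u = 0) : u = 0 := by
  refine eq_zero_of_pow_dotProduct_eq_zero_of_eq_zero_off hlam.injOn (S := S) (fun i hi ↦ ?_)
    fun t ht ↦ hu t (by omega)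
  exact apply_eq_zero_of_nonneg_off_of_pow_dotProduct_eq_zero hnonneg hu fun j hj ↦
    hlam.ne fun hij ↦ hi (hij ▸ hj)

end OrderedRing

theorem nonneg_of_sum_abs_le_sum [AddCommGroup R] [LinearOrder R] [IsOrderedAddMonoid R]
    {z : ι → R} (hz : ∑ i, |z i| ≤ ∑ i, z i) : 0 ≤ z := by
  have sum_eq : ∑ i, z i = ∑ i, |z i| := (sum_le_sum fun i _ ↦ le_abs_self (z i)).antisymm hz
  have eq_abs := (sum_eq_sum_iff_of_le fun i _ ↦ le_abs_self (z i)).mp sum_eq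
  exact fun i ↦ abs_eq_self.mp (eq_abs i (mem_univ i)).symm

theorem sum_abs_lt_sum_abs_of_pow_dotProduct_eq [CommRing R] [LinearOrder R]
    [IsStrictOrderedRing R] {lam z z₀ : ι → R} (hlam : Function.Injective lam)
    (hz₀ : 0 ≤ z₀) {S : Finset ι} (hoff : ∀ i ∉ S, z₀ i = 0)
    (hz : ∀ t ≤ 2 * #S, lam ^ t ⬝ᵥ z = lam ^ t ⬝ᵥ z₀) (hne : z ≠ z₀) :
    ∑ i, |z₀ i| < ∑ i, |z i| := by
  by_contra! hle
  have sum_eq : ∑ i, z i = ∑ i, z₀ i := by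
    simpa only [pow_zero, one_dotProduct] using hz 0 (Nat.zero_le _)
  have hz_nonneg : 0 ≤ z := nonneg_of_sum_abs_le_sum <| calc
    ∑ i, |z i| ≤ ∑ i, |z₀ i| := hle
    _ = ∑ i, z₀ i := sum_congr rfl fun i _ ↦ abs_of_nonneg (hz₀ i)
    _ = ∑ i, z i := sum_eq.symm
  refine hne (sub_eq_zero.mp ?_)
  refine eq_zero_of_nonneg_off_of_pow_dotProduct_eq_zero hlam (S := S) (fun i hi ↦ ?_)
    fun t ht ↦ ?_
  · rw [Pi.sub_apply, hoff i hi, sub_zero]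
    exact hz_nonneg i
  · rw [dotProduct_sub, hz t ht, sub_self]

theorem dotProduct_diagonal_pow_mulVec [CommSemiring R] [DecidableEq ι] (c lam x : ι → R) (t : ℕ) :
    c ⬝ᵥ (diagonal lam ^ t *ᵥ x) = lam ^ t ⬝ᵥ (diagonal c *ᵥ x) := by
  rw [diagonal_pow]
  refine sum_congr rfl fun j _ ↦ ?_
  rw [mulVec_diagonal, mulVec_diagonal, mul_left_comm]

theorem sparse_recovery_l1_diagonal_sign_condition_general {𝕜 : Type*} [Field 𝕜] [LinearOrder 𝕜]
    [IsStrictOrderedRing 𝕜] [DecidableEq ι] {K : ℕ} {lam : ι → 𝕜}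
    (hlam : Function.Injective lam) {C : ι → 𝕜} (hC : ∀ j, C j ≠ 0) {x₀ : ι → 𝕜}
    (hsparse : #{i | x₀ i ≠ 0} ≤ K) (hsign : ∀ i, 0 ≤ C i * x₀ i)
    {y : Fin (2 * K + 1) → 𝕜} (hy : ∀ t, y t = C ⬝ᵥ (diagonal lam ^ (t : ℕ) *ᵥ x₀))
    {M : Matrix (Fin (2 * K + 1)) ι 𝕜} (hM : ∀ t j, M t j = lam j ^ (t : ℕ))
    {z₀ : ι → 𝕜} (hz₀ : z₀ = diagonal C *ᵥ x₀) :
    (M *ᵥ z₀ = y ∧ ∀ z, M *ᵥ z = y → z ≠ z₀ → ∑ i, |z₀ i| < ∑ i, |z i|) ∧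
      ∀ i, x₀ i = z₀ i / C i := by
  have z₀_apply (i) : z₀ i = C i * x₀ i := by rw [hz₀, mulVec_diagonal]
  have M_mulVec (z) (t) : (M *ᵥ z) t = lam ^ (t : ℕ) ⬝ᵥ z :=
    congrArg (· ⬝ᵥ z) (funext (hM t))
  have feasible : M *ᵥ z₀ = y := by
    ext t
    rw [M_mulVec, hy, dotProduct_diagonal_pow_mulVec, hz₀]
  refine ⟨⟨feasible, fun z hz hne ↦ ?_⟩, fun i ↦ ?_⟩
  · refine sum_abs_lt_sum_abs_of_pow_dotProduct_eq hlam (fun i ↦ ?_)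
      (S := {i | x₀ i ≠ 0}) (fun i hi ↦ ?_) (fun t ht ↦ ?_) hne
    · exact (hsign i).trans_eq (z₀_apply i).symm
    · rw [z₀_apply, show x₀ i = 0 by simpa using hi, mul_zero]
    · have ht' : t < 2 * K + 1 := by omega
      rw [← M_mulVec z ⟨t, ht'⟩, ← M_mulVec z₀ ⟨t, ht'⟩, hz, feasible]
  · rw [z₀_apply, mul_div_cancel_left₀ _ (hC i)]

end

/-- Proposition 2 of the paper. With `A = diag(λ₁, …, λₙ)` (distinct
nonzero diagonal entries), a row vector `C` with nonzero entries, a `K`-sparse initial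
state `x₀` satisfying the sign condition `c_i (x₀)_i ≥ 0`, and the `2K+1` successive
observations `y_t = C A^t x₀` (`t = 0, …, 2K`), the vector `z₀ = diag(C) x₀` is the
unique ℓ1-minimizer of `‖z‖₁` subject to `M z = y` (where `M` is the Vandermonde-type
matrix `M_{t,j} = λ_j^t`), and `x₀` is recovered via `(x₀)_i = (z₀)_i / c_i`. -/
theorem sparse_recovery_l1_diagonal_sign_condition
    {n K : ℕ} (hK : 1 ≤ K) (hn : 2 * K + 1 ≤ n)
    (lam : Fin n → ℝ) (hdistinct : Function.Injective lam)
    (hnonzero : ∀ j, lam j ≠ 0)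
    (C : Fin n → ℝ) (hC : ∀ j, C j ≠ 0)
    (x₀ : Fin n → ℝ)
    (hsparse : (Finset.univ.filter (fun i => x₀ i ≠ 0)).card ≤ K)
    (hsign : ∀ i, 0 ≤ C i * x₀ i)
    (y : Fin (2 * K + 1) → ℝ)
    (hy : ∀ t : Fin (2 * K + 1),
      y t = C ⬝ᵥ ((Matrix.diagonal lam ^ (t : ℕ)).mulVec x₀))
    (M : Matrix (Fin (2 * K + 1)) (Fin n) ℝ)
    (hM : ∀ t j, M t j = lam j ^ (t : ℕ))
    (z₀ : Fin n → ℝ) (hz₀ : z₀ = (Matrix.diagonal C).mulVec x₀) :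
    (M.mulVec z₀ = y ∧
      ∀ z : Fin n → ℝ, M.mulVec z = y → z ≠ z₀ → ∑ i, |z₀ i| < ∑ i, |z i|) ∧
    ∀ i, x₀ i = z₀ i / C i :=
  sparse_recovery_l1_diagonal_sign_condition_general hdistinct hC hsparse hsign hy hM hz₀
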